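/- Let X and E be real normed spaces, e : ℕ → X and u : ℕ → E sequences, and assume: (i) u is spreading, i.e. for every strictly increasing ψ : ℕ → ℕ and every finitely supported a : ℕ → ℝ, ‖∑_i a_i u_{ψ(i)}‖ = ‖∑_i a_i u_i‖; (ii) no subsequence of e dominates u, i.e. for every strictly increasing φ : ℕ → ℕ and every C > 0 there exists a finitely supported a : ℕ → ℝ with ‖∑_i a_i u_i‖ > C ‖∑_i a_i e_{φ(i)}‖. Let (A_m)_{m∈ℕ} be a partition of ℕ into pairwise disjoint nonempty finite sets whose union is ℕ. Then for every D > 0 there exists M ∈ ℕ such that: for every set K ⊆ ℕ satisfying |K ∩ A_m| = 1 for all m < M, there exists a finitely supported a : ℕ → ℝ whose support is contained in K ∩ (A_0 ∪ … ∪ A_{M−1}) such that ‖∑_{k} a_k u_k‖ > D ‖∑_{k} a_k e_k‖. -/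

import Mathlib

/-!
A choice of one point from each `A m` has infinite range, so it contains a finite set supporting
a witness against domination; as that witness only involves finitely many of the `A m`, Rado's
selection principle makes their number uniform over all choices. By spreading, if `e ∘ φ` does not
dominate `u` then it does not dominate `u ∘ φ` either, so that a witness can be transported to the
range of `φ` for both sequences at once.
-/

section Selection

variable {ι κ : Type*}

theorem finite_setOf_mem_of_pairwise_disjoint {A : κ → Finset ι}
    (hA : ∀ k l, k ≠ l → Disjoint (A k) (A l)) (i : ι) : {k | i ∈ A k}.Finite :=
  Set.Subsingleton.finite fun k hk l hl => by_contra fun hne =>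
    Finset.disjoint_left.1 (hA k l hne) hk hl

theorem infinite_range_of_forall_mem [Infinite κ] {A : κ → Set ι} (hA : ∀ i, {k | i ∈ A k}.Finite)
    {f : κ → ι} (hf : ∀ k, f k ∈ A k) : (Set.range f).Infinite := by
  intro hfin
  have hfiber : ∀ i ∈ Set.range f, (f ⁻¹' {i}).Finite := fun i _ =>
    (hA i).subset fun k (hk : f k = i) => hk ▸ hf k
  exact Set.infinite_univ (Set.preimage_range f ▸ hfin.preimage' hfiber)

theorem exists_finset_forall_selection_contains [Infinite κ] {F : Set (Finset ι)}
    (hF : ∀ S : Set ι, S.Infinite → ∃ s ∈ F, (s : Set ι) ⊆ S)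
    {A : κ → Finset ι} (hA : ∀ i, {k | i ∈ A k}.Finite) :
    ∃ T : Finset κ, ∀ K : Set ι, (∀ k ∈ T, ∃ i ∈ K, i ∈ A k) →
      ∃ s ∈ F, ∀ i ∈ s, i ∈ K ∧ ∃ k ∈ T, i ∈ A k := by
  classical
  by_contra! hbad
  choose K hmeet hK using hbad
  have hne : ∀ k, Nonempty (A k) := fun k =>
    let ⟨i, _, hi⟩ := hmeet {k} k (Finset.mem_singleton_self k)
    ⟨⟨i, hi⟩⟩
  have hselect : ∀ T k, ∃ i : A k, k ∈ T → (i : ι) ∈ K T := fun T k => by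
    by_cases hk : k ∈ T
    · obtain ⟨i, hiK, hiA⟩ := hmeet T k hk
      exact ⟨⟨i, hiA⟩, fun _ => hiK⟩
    · exact ⟨Classical.arbitrary _, fun h => absurd h hk⟩
  choose g hg using hselect
  obtain ⟨χ, hχ⟩ := Finset.rado_selection g
  obtain ⟨s, hsF, hs⟩ := hF (Set.range fun k => (χ k : ι))
    (infinite_range_of_forall_mem hA fun k => (χ k).2)
  rw [← Set.image_univ, Finset.subset_set_image_iff] at hs
  obtain ⟨T₀, -, rfl⟩ := hs
  obtain ⟨T, hT₀, hagree⟩ := hχ T₀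
  obtain ⟨i, hi, hiK⟩ := hK T _ hsF
  obtain ⟨k, hk, rfl⟩ := Finset.mem_image.1 hi
  have hmem : (χ k : ι) ∈ K T := hagree k hk ▸ hg T k (hT₀ hk)
  exact hiK hmem k (hT₀ hk) (χ k).2

end Selection

section Domination

variable {𝕜 X E : Type*} [NormedField 𝕜] [SeminormedAddCommGroup X] [NormedSpace 𝕜 X]
  [SeminormedAddCommGroup E] [NormedSpace 𝕜 E]

variable (𝕜) in
/-- The sequence `x` `C`-dominates the sequence `y`, the scalar field being `𝕜`. -/
def CDominates (C : ℝ) (x : ℕ → X) (y : ℕ → E) : Prop :=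
  ∀ a : ℕ →₀ 𝕜, ‖Finsupp.linearCombination 𝕜 y a‖ ≤ C * ‖Finsupp.linearCombination 𝕜 x a‖

theorem exists_support_subset_of_not_cDominates_comp {C : ℝ} {x : ℕ → X} {y : ℕ → E}
    {φ : ℕ ↪ ℕ} (h : ¬ CDominates 𝕜 C (x ∘ φ) (y ∘ φ)) :
    ∃ a : ℕ →₀ 𝕜, (a.support : Set ℕ) ⊆ Set.range φ ∧
      C * ‖Finsupp.linearCombination 𝕜 x a‖ < ‖Finsupp.linearCombination 𝕜 y a‖ := by
  simp only [CDominates, not_forall, not_le] at h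
  obtain ⟨a, ha⟩ := h
  refine ⟨a.embDomain φ, ?_, ?_⟩
  · rw [Finsupp.support_embDomain, Finset.coe_map]
    exact Set.image_subset_range _ _
  · rwa [Finsupp.linearCombination_embDomain, Finsupp.linearCombination_embDomain]

theorem selection_not_dominating_of_no_subseq_dominates_general {C : ℝ} {x : ℕ → X} {y : ℕ → E}
    (h : ∀ φ : ℕ → ℕ, StrictMono φ → ¬ CDominates 𝕜 C (x ∘ φ) (y ∘ φ))
    {A : ℕ → Finset ℕ} (hA : ∀ n, {m | n ∈ A m}.Finite) :
    ∃ M : ℕ, ∀ K : Set ℕ, (∀ m < M, ∃ k, k ∈ K ∧ k ∈ A m) →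
      ∃ a : ℕ →₀ 𝕜, (∀ k ∈ a.support, k ∈ K ∧ ∃ m < M, k ∈ A m) ∧
        C * ‖Finsupp.linearCombination 𝕜 x a‖ < ‖Finsupp.linearCombination 𝕜 y a‖ := by
  classical
  let F : Set (Finset ℕ) := Finsupp.support '' {a : ℕ →₀ 𝕜 |
    C * ‖Finsupp.linearCombination 𝕜 x a‖ < ‖Finsupp.linearCombination 𝕜 y a‖}
  have hF : ∀ S : Set ℕ, S.Infinite → ∃ s ∈ F, (s : Set ℕ) ⊆ S := fun S hS => by
    have := hS.to_subtype
    obtain ⟨a, haS, ha⟩ := exists_support_subset_of_not_cDominates_comp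
      (h _ (Nat.orderEmbeddingOfSet S).strictMono)
    exact ⟨a.support, ⟨a, ha, rfl⟩, haS.trans (Nat.orderEmbeddingOfSet_range S).subset⟩
  obtain ⟨T, hT⟩ := exists_finset_forall_selection_contains hF hA
  obtain ⟨M, hTM⟩ := T.exists_nat_subset_range
  have hlt : ∀ m ∈ T, m < M := fun m hm => Finset.mem_range.1 (hTM hm)
  refine ⟨M, fun K hK => ?_⟩
  obtain ⟨_, ⟨a, ha, rfl⟩, hsupp⟩ := hT K fun m hm => hK m (hlt m hm)
  refine ⟨a, fun k hk => ?_, ha⟩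
  obtain ⟨hkK, m, hm, hkA⟩ := hsupp k hk
  exact ⟨hkK, m, hlt m hm, hkA⟩

end Domination

/-- Compactness observation at the start of the proof of Proposition I:
if `u` is spreading and no subsequence of `e` dominates `u`, then for any
partition of `ℕ` into disjoint nonempty finite sets `A m` and any `D > 0`
there is `M` such that for every selection set `K` meeting each `A m`
(`m < M`) in exactly one point, some finitely supported `a` supported in
`K ∩ (A 0 ∪ … ∪ A (M-1))` witnesses `‖∑ a_k u_k‖ > D ‖∑ a_k e_k‖`. -/
theorem selection_not_dominating_of_no_subseq_dominates
    {X E : Type*} [NormedAddCommGroup X] [NormedSpace ℝ X]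
    [NormedAddCommGroup E] [NormedSpace ℝ E]
    (e : ℕ → X) (u : ℕ → E)
    (hspread : ∀ ψ : ℕ → ℕ, StrictMono ψ → ∀ a : ℕ →₀ ℝ,
      ‖∑ i ∈ a.support, a i • u (ψ i)‖ = ‖∑ i ∈ a.support, a i • u i‖)
    (hnodom : ∀ φ : ℕ → ℕ, StrictMono φ → ∀ C : ℝ, 0 < C →
      ∃ a : ℕ →₀ ℝ,
        ‖∑ i ∈ a.support, a i • u i‖ > C * ‖∑ i ∈ a.support, a i • e (φ i)‖)
    (A : ℕ → Finset ℕ)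
    (hA_nonempty : ∀ m, (A m).Nonempty)
    (hA_disjoint : ∀ m m', m ≠ m' → Disjoint (A m) (A m'))
    (hA_cover : ∀ n : ℕ, ∃ m, n ∈ A m) :
    ∀ D : ℝ, 0 < D → ∃ M : ℕ,
      ∀ K : Set ℕ, (∀ m < M, ∃! k, k ∈ K ∧ k ∈ A m) →
        ∃ a : ℕ →₀ ℝ,
          (∀ k ∈ a.support, k ∈ K ∧ ∃ m < M, k ∈ A m) ∧
          ‖∑ k ∈ a.support, a k • u k‖ > D * ‖∑ k ∈ a.support, a k • e k‖ := by
  intro D hD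
  have hnodom_comp : ∀ φ : ℕ → ℕ, StrictMono φ → ¬ CDominates ℝ D (e ∘ φ) (u ∘ φ) :=
    fun φ hφ hdom =>
      let ⟨a, ha⟩ := hnodom φ hφ D hD
      ha.not_ge ((hspread φ hφ a).symm.trans_le (hdom a))
  obtain ⟨M, hM⟩ := selection_not_dominating_of_no_subseq_dominates_general hnodom_comp
    (finite_setOf_mem_of_pairwise_disjoint hA_disjoint)
  exact ⟨M, fun K hK => hM K fun m hm => (hK m hm).exists⟩
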